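/- Let λ have block structure k = (k_1,…,k_s) with n = k_1+…+k_s. Then the Gelfand–Cetlin polytope P_λ has dimension Σ_{1≤i<j≤s} k_i k_j = (n² − Σ_{i=1}^s k_i²)/2, where the dimension is that of the affine span of P_λ in ℝ^d. -/

import Mathlib

open Classical

noncomputable section

/-- Partial sums of the (0-indexed) sequence `k`: `nseq k i = k 0 + ⋯ + k (i-1)`;
so `nseq k i` is the paper's `n_i` for the sequence `(k_1, …, k_s) = (k 0, …, k (s-1))`. -/
def nseq (k : ℕ → ℕ) (i : ℕ) : ℕ := ∑ j ∈ Finset.range i, k j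

/-- The set of terminal vertices `T_k = {(n_i, n - n_i) : 0 ≤ i ≤ s}` of the ladder diagram. -/
def terminals (s : ℕ) (k : ℕ → ℕ) : Set (ℕ × ℕ) :=
  {v | ∃ i ≤ s, v = (nseq k i, nseq k s - nseq k i)}

/-- The vertex set of the ladder diagram `Γ_k`. -/
def ladderV (s : ℕ) (k : ℕ → ℕ) : Set (ℕ × ℕ) :=
  {v | ∃ t ∈ terminals s k, v.1 ≤ t.1 ∧ v.2 ≤ t.2}

/-- A unit grid step: one step to the right or one step up. -/
def gridStep (v w : ℕ × ℕ) : Prop :=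
  w = (v.1 + 1, v.2) ∨ w = (v.1, v.2 + 1)

/-- The edge set of the ladder diagram `Γ_k`. -/
def ladderE (s : ℕ) (k : ℕ → ℕ) : Set ((ℕ × ℕ) × (ℕ × ℕ)) :=
  {e | e.1 ∈ ladderV s k ∧ e.2 ∈ ladderV s k ∧ gridStep e.1 e.2}

/-- A combinatorial (directed) graph in the grid `ℤ_{≥0} × ℤ_{≥0}`,
given by a set of vertices and a set of edges. -/
@[ext] structure LGraph where
  V : Set (ℕ × ℕ)
  E : Set ((ℕ × ℕ) × (ℕ × ℕ))

/-- Subgraph inclusion order on grid graphs. -/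
instance : PartialOrder LGraph where
  le γ γ' := γ.V ⊆ γ'.V ∧ γ.E ⊆ γ'.E
  le_refl γ := ⟨subset_rfl, subset_rfl⟩
  le_trans a b c h h' := ⟨h.1.trans h'.1, h.2.trans h'.2⟩
  le_antisymm a b h h' := LGraph.ext (subset_antisymm h.1 h'.1) (subset_antisymm h.2 h'.2)

/-- The ladder diagram `Γ_k` as a grid graph. -/
def ladder (s : ℕ) (k : ℕ → ℕ) : LGraph :=
  ⟨ladderV s k, ladderE s k⟩

/-- A positive path: (the graph of) a shortest path in the ladder diagram `Γ_k`
from the origin `(0,0)` to a terminal vertex. -/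
def IsPositivePath (s : ℕ) (k : ℕ → ℕ) (p : LGraph) : Prop :=
  ∃ (m : ℕ) (f : ℕ → ℕ × ℕ),
    f 0 = (0, 0) ∧ f m ∈ terminals s k ∧
    (∀ i < m, gridStep (f i) (f (i + 1))) ∧
    (∀ i ≤ m, f i ∈ ladderV s k) ∧
    p.V = {v | ∃ i ≤ m, v = f i} ∧
    p.E = {e | ∃ i < m, e = (f i, f (i + 1))}

/-- A face of the ladder diagram `Γ_k`: a subgraph which contains all terminal
vertices and is a union of positive paths. -/
def IsLadderFace (s : ℕ) (k : ℕ → ℕ) (γ : LGraph) : Prop :=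
  terminals s k ⊆ γ.V ∧
  ∃ P : Set LGraph, (∀ p ∈ P, IsPositivePath s k p) ∧
    γ.V = ⋃ p ∈ P, LGraph.V p ∧ γ.E = ⋃ p ∈ P, LGraph.E p

/-- The dimension (first Betti number) of a face of a ladder diagram:
`|E(γ)| - |V(γ)| + 1`. -/
def ldim (γ : LGraph) : ℤ :=
  (γ.E.ncard : ℤ) - (γ.V.ncard : ℤ) + 1

/-- The index set `I = {(i,j) : i,j ≥ 1, i+j ≤ n}` of the coordinates of a
Gelfand–Cetlin pattern. -/
def GCIdx (n : ℕ) : Set (ℕ × ℕ) := {p | 1 ≤ p.1 ∧ 1 ≤ p.2 ∧ p.1 + p.2 ≤ n}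

/-- The entries of a Gelfand–Cetlin pattern `x`, extended by the boundary
condition `x_{i, n+1-i} = λ_i`. -/
def gcEntry (n : ℕ) (lam : ℕ → ℝ) (x : GCIdx n → ℝ) (p : ℕ × ℕ) : ℝ :=
  if h : p ∈ GCIdx n then x ⟨p, h⟩ else lam p.1

/-- The Gelfand–Cetlin polytope `P_λ`: the set of points `(x_{i,j})_{(i,j) ∈ I}`
with `x_{i,j+1} ≥ x_{i,j} ≥ x_{i+1,j}` for all `(i,j) ∈ I`, where
`x_{i,n+1-i} = λ_i`. -/
def GCPoly (n : ℕ) (lam : ℕ → ℝ) : Set (GCIdx n → ℝ) :=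
  {x | ∀ i j : ℕ, (i, j) ∈ GCIdx n →
    gcEntry n lam x (i, j) ≤ gcEntry n lam x (i, j + 1) ∧
    gcEntry n lam x (i + 1, j) ≤ gcEntry n lam x (i, j)}

/-- The subset of `P_λ` obtained by turning the inequalities
`x_{i,j+1} ≥ x_{i,j}` for `(i,j) ∈ SH` and `x_{i,j} ≥ x_{i+1,j}` for
`(i,j) ∈ SV` into equalities. -/
def GCFaceOf (n : ℕ) (lam : ℕ → ℝ) (SH SV : Set (ℕ × ℕ)) : Set (GCIdx n → ℝ) :=
  {x | x ∈ GCPoly n lam ∧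
    (∀ p ∈ SH, gcEntry n lam x (p.1, p.2 + 1) = gcEntry n lam x p) ∧
    (∀ p ∈ SV, gcEntry n lam x p = gcEntry n lam x (p.1 + 1, p.2))}

/-- A face of the GC polytope: a nonempty solution set of the system obtained
by replacing some of the defining inequalities by equalities. -/
def IsGCFace (n : ℕ) (lam : ℕ → ℝ) (F : Set (GCIdx n → ℝ)) : Prop :=
  F.Nonempty ∧ ∃ SH SV : Set (ℕ × ℕ), SH ⊆ GCIdx n ∧ SV ⊆ GCIdx n ∧
    F = GCFaceOf n lam SH SV

/-- The dimension of (a face of) the GC polytope: the dimension of its affine span. -/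
def GCdim (n : ℕ) (F : Set (GCIdx n → ℝ)) : ℕ :=
  Module.finrank ℝ (affineSpan ℝ F).direction

/-- `lam` (1-indexed) is weakly decreasing with block structure `k`: it is
constant on each block `(n_{i-1}, n_i]` and strictly decreases between
consecutive blocks. -/
def HasBlockStructure (s : ℕ) (k : ℕ → ℕ) (lam : ℕ → ℝ) : Prop :=
  (∀ i < s, ∀ a b : ℕ, nseq k i < a → a ≤ b → b ≤ nseq k (i + 1) → lam a = lam b) ∧
  (∀ i : ℕ, 1 ≤ i → i < s → lam (nseq k i + 1) < lam (nseq k i))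

/-- The edge set of the graph `φ(F)` associated to a subset `F` of the GC polytope. -/
def phiE (n : ℕ) (lam : ℕ → ℝ) (F : Set (GCIdx n → ℝ)) :
    Set ((ℕ × ℕ) × (ℕ × ℕ)) :=
  {e | (∃ i < n, e = ((0, i), (0, i + 1)) ∨ e = ((i, 0), (i + 1, 0))) ∨
    (∃ i j : ℕ, (i, j) ∈ GCIdx n ∧ e = ((i - 1, j), (i, j)) ∧
      ∃ x ∈ F, gcEntry n lam x (i, j) < gcEntry n lam x (i, j + 1)) ∨
    (∃ i j : ℕ, (i, j) ∈ GCIdx n ∧ e = ((i, j - 1), (i, j)) ∧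
      ∃ x ∈ F, gcEntry n lam x (i + 1, j) < gcEntry n lam x (i, j))}

/-- The graph `φ(F)`: its edges are given by `phiE` and its vertices are the
endpoints of its edges. -/
def phiGC (n : ℕ) (lam : ℕ → ℝ) (F : Set (GCIdx n → ℝ)) : LGraph where
  V := {v | ∃ e ∈ phiE n lam F, v = e.1 ∨ v = e.2}
  E := phiE n lam F

/-- The map `ψ`: for a subgraph `γ`, the set of points of `P_λ` where the
inequalities corresponding to the missing edges of `γ` become equalities. -/
def psiGC (n : ℕ) (lam : ℕ → ℝ) (γ : LGraph) : Set (GCIdx n → ℝ) :=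
  {x | x ∈ GCPoly n lam ∧ ∀ i j : ℕ, (i, j) ∈ GCIdx n →
    (((i - 1, j), (i, j)) ∉ γ.E → gcEntry n lam x (i, j) = gcEntry n lam x (i, j + 1)) ∧
    (((i, j - 1), (i, j)) ∉ γ.E → gcEntry n lam x (i, j) = gcEntry n lam x (i + 1, j))}
/-- The recursively defined point `x̄` of the proof of Lemma 2.6 (bijectivity):
`x̄_{i,j} = λ_i` if `i + j = n + 1`, and for `i + j ≤ n` it is determined from
`x̄_{i,j+1}` and `x̄_{i+1,j}` according to which of the two edges
`((i-1,j),(i,j))`, `((i,j-1),(i,j))` belong to `E`. -/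
def barX (n : ℕ) (lam : ℕ → ℝ) (E : Set ((ℕ × ℕ) × (ℕ × ℕ))) : ℕ → ℕ → ℝ
  | i, j =>
    if h1 : n + 1 ≤ i + j then lam i
    else if h2 : ((i - 1, j), (i, j)) ∈ E then
      if h3 : ((i, j - 1), (i, j)) ∈ E then
        (barX n lam E i (j + 1) + barX n lam E (i + 1) j) / 2
      else barX n lam E (i + 1) j
    else barX n lam E i (j + 1)
  termination_by i j => n + 1 - (i + j)
  decreasing_by all_goals omega

/-- `α, β : ℕ → ℕ` encode an element
`w = ((α_1,β_1),…,(α_{s-1},β_{s-1})) ∈ W_{s-1}`, with the conventions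
`α_0 = 0`, `β_0 = 1`, `α_s = 1`, `β_s = 0`. -/
def IsW (s : ℕ) (α β : ℕ → ℕ) : Prop :=
  (∀ i : ℕ, 1 ≤ i → i < s →
    (α i, β i) = (1, 0) ∨ (α i, β i) = (0, 1) ∨ (α i, β i) = (1, 1)) ∧
  α 0 = 0 ∧ β 0 = 1 ∧ α s = 1 ∧ β s = 0

/-- The edge set of the subgraph `g_w` of `Γ_k`: the horizontal edge into the
terminal vertex `v_i` when `α_i = 1` and the vertical edge into `v_i` when
`β_i = 1`. -/
def gwE (s : ℕ) (k α β : ℕ → ℕ) : Set ((ℕ × ℕ) × (ℕ × ℕ)) :=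
  {e | ∃ i ≤ s,
    (α i = 1 ∧
      e = ((nseq k i - 1, nseq k s - nseq k i), (nseq k i, nseq k s - nseq k i))) ∨
    (β i = 1 ∧
      e = ((nseq k i, nseq k s - nseq k i - 1), (nseq k i, nseq k s - nseq k i)))}

/-- The subgraph `g_w` of `Γ_k`. -/
def gwGraph (s : ℕ) (k α β : ℕ → ℕ) : LGraph where
  V := {v | ∃ e ∈ gwE s k α β, v = e.1 ∨ v = e.2}
  E := gwE s k α β

/-- The interleaved sequence `r_w(k) * w̃` of length `2s - 1` (0-indexed):
entry `2j` is `k''_{j+1} = k_{j+1} + 1 - α_{j+1} - β_j` and entry `2j + 1` is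
`w̃_{j+1} = α_{j+1} β_{j+1}`. -/
def rstar (s : ℕ) (k α β : ℕ → ℕ) (t : ℕ) : ℕ :=
  if t % 2 = 0 then k (t / 2) + 1 - α (t / 2 + 1) - β (t / 2)
  else α (t / 2 + 1) * β (t / 2 + 1)

/-- `α`-value of one of the three symbols `(1,0), (0,1), (1,1)`,
encoded as `0, 1, 2 : Fin 3` respectively. -/
def aW3 (c : Fin 3) : ℕ := if c = 1 then 0 else 1

/-- `β`-value of one of the three symbols `(1,0), (0,1), (1,1)`,
encoded as `0, 1, 2 : Fin 3` respectively. -/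
def bW3 (c : Fin 3) : ℕ := if c = 0 then 0 else 1

/-- The function `α` of the element of `W_{s-1}` encoded by
`c : Fin (s-1) → Fin 3` (with the conventions `α_0 = 0`, `α_s = 1`). -/
def alph (s : ℕ) (c : Fin (s - 1) → Fin 3) (i : ℕ) : ℕ :=
  if i = 0 then 0 else if h : i - 1 < s - 1 then aW3 (c ⟨i - 1, h⟩) else 1

/-- The function `β` of the element of `W_{s-1}` encoded by
`c : Fin (s-1) → Fin 3` (with the conventions `β_0 = 1`, `β_s = 0`). -/
def bet (s : ℕ) (c : Fin (s - 1) → Fin 3) (i : ℕ) : ℕ :=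
  if i = 0 then 1 else if h : i - 1 < s - 1 then bW3 (c ⟨i - 1, h⟩) else 0

/-- The interleaved sequence `r_w(k) * w̃` (of length `2s - 1`, 0-indexed) for
the element `w ∈ W_{s-1}` encoded by `c`. -/
def newk (s : ℕ) (c : Fin (s - 1) → Fin 3) (k : ℕ → ℕ) (t : ℕ) : ℕ :=
  if t % 2 = 0 then k (t / 2) + 1 - alph s c (t / 2 + 1) - bet s c (t / 2)
  else alph s c (t / 2 + 1) * bet s c (t / 2 + 1)

/-- `|w| = Σ_{i=1}^{s-1} α_i β_i` for the element `w ∈ W_{s-1}` encoded by `c`. -/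
def wsize (s : ℕ) (c : Fin (s - 1) → Fin 3) : ℕ :=
  ∑ j ∈ Finset.range (s - 1), alph s c (j + 1) * bet s c (j + 1)

/-- The subgraph `g_w` of `Γ_k` for the element `w ∈ W_{s-1}` encoded by `c`. -/
def gwGraph3 (s : ℕ) (k : ℕ → ℕ) (c : Fin (s - 1) → Fin 3) : LGraph :=
  gwGraph s k (alph s c) (bet s c)

/-- Union of two grid graphs (union of vertex sets and of edge sets). -/
def ugraph (γ δ : LGraph) : LGraph := ⟨γ.V ∪ δ.V, γ.E ∪ δ.E⟩

/-- The generating function `F_k(t) = Σ_{γ face of Γ_k} t^{dim γ}` of the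
`f`-vector of the ladder diagram `Γ_k`, as a formal power series in `t`:
the coefficient of `t^d` is the number of faces of `Γ_k` of dimension `d`. -/
def fpol (s : ℕ) (k : ℕ → ℕ) : PowerSeries ℤ :=
  PowerSeries.mk fun d =>
    (Set.ncard {γ : LGraph | IsLadderFace s k γ ∧ ldim γ = (d : ℤ)} : ℤ)

/-- The operator `Π_{i=1}^{s-1} (∂/∂x_i + ∂/∂x_{i+1} + t ∂/∂y_i)` applied to a
polynomial in the variables `x_1, x_2, … , y_1, y_2, …` (the variable `x_{i+1}`
is `Sum.inl i` and `y_{i+1}` is `Sum.inr i`) over `ℚ[t]`. -/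
def Lfold (s : ℕ) (f : MvPolynomial (ℕ ⊕ ℕ) (Polynomial ℚ)) :
    MvPolynomial (ℕ ⊕ ℕ) (Polynomial ℚ) :=
  (List.range (s - 1)).foldl
    (fun g i =>
      MvPolynomial.pderiv (Sum.inl i) g + MvPolynomial.pderiv (Sum.inl (i + 1)) g +
        (Polynomial.X : Polynomial ℚ) • MvPolynomial.pderiv (Sum.inr i) g) f

/-- The operator `D_w = Π_{i=1}^{s-1} (∂/∂x_i)^{1-α_i} (∂/∂x_{i+1})^{1-β_i}
(t ∂/∂y_i)^{α_i β_i}` for the element `w ∈ W_{s-1}` encoded by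
`c : Fin (s-1) → Fin 3` (`0 ↦ (1,0)`, `1 ↦ (0,1)`, `2 ↦ (1,1)`). -/
def DfoldC (s : ℕ) (c : Fin (s - 1) → Fin 3)
    (f : MvPolynomial (ℕ ⊕ ℕ) (Polynomial ℚ)) : MvPolynomial (ℕ ⊕ ℕ) (Polynomial ℚ) :=
  (List.finRange (s - 1)).foldl
    (fun g i =>
      if c i = 0 then MvPolynomial.pderiv (Sum.inl ((i : ℕ) + 1)) g
      else if c i = 1 then MvPolynomial.pderiv (Sum.inl (i : ℕ)) g
      else (Polynomial.X : Polynomial ℚ) • MvPolynomial.pderiv (Sum.inr (i : ℕ)) g) f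

/-- The operator `D_w` for the element `w ∈ W_{s-1}` encoded by `α, β : ℕ → ℕ`. -/
def DfoldW (s : ℕ) (α β : ℕ → ℕ)
    (f : MvPolynomial (ℕ ⊕ ℕ) (Polynomial ℚ)) : MvPolynomial (ℕ ⊕ ℕ) (Polynomial ℚ) :=
  (List.range (s - 1)).foldl
    (fun g j =>
      if α (j + 1) = 1 ∧ β (j + 1) = 1 then
        (Polynomial.X : Polynomial ℚ) • MvPolynomial.pderiv (Sum.inr j) g
      else if α (j + 1) = 1 then MvPolynomial.pderiv (Sum.inl (j + 1)) g
      else MvPolynomial.pderiv (Sum.inl j) g) f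

/-- Substitution of `0` for all the variables `y_j = Sum.inr j`. -/
def setYzero :
    MvPolynomial (ℕ ⊕ ℕ) (Polynomial ℚ) →ₐ[Polynomial ℚ] MvPolynomial (ℕ ⊕ ℕ) (Polynomial ℚ) :=
  MvPolynomial.aeval
    (Sum.elim (fun i => MvPolynomial.X (Sum.inl i)) fun _ => (0 : MvPolynomial (ℕ ⊕ ℕ) (Polynomial ℚ)))
end

theorem nseq_succ_aux (k : ℕ → ℕ) (i : ℕ) : nseq k (i + 1) = nseq k i + k i := by
  simp [nseq, Finset.sum_range_succ]

theorem nseq_mono_aux (k : ℕ → ℕ) : Monotone (nseq k) :=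
  monotone_nat_of_le_succ fun i => by rw [nseq_succ_aux]; omega

theorem block_exists_aux (k : ℕ → ℕ) (s a : ℕ) (h1 : 1 ≤ a) (h2 : a ≤ nseq k s) :
    ∃ i < s, nseq k i < a ∧ a ≤ nseq k (i + 1) := by
  induction s with
  | zero => simp [nseq] at h2; omega
  | succ m ih =>
    by_cases h : a ≤ nseq k m
    · obtain ⟨i, hi, h'⟩ := ih h
      exact ⟨i, by omega, h'⟩
    · exact ⟨m, by omega, by omega, h2⟩

theorem lam_step_aux (s : ℕ) (k : ℕ → ℕ) (lam : ℕ → ℝ) (hlam : HasBlockStructure s k lam)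
    (a : ℕ) (h1 : 1 ≤ a) (h2 : a + 1 ≤ nseq k s) : lam (a + 1) ≤ lam a := by
  obtain ⟨i, hi, hia, hai⟩ := block_exists_aux k s a h1 (by omega)
  by_cases h : a = nseq k (i + 1)
  · have : i + 1 < s := by
      by_contra hc
      have : i + 1 = s := by omega
      rw [this] at h
      omega
    rw [h]
    exact (hlam.2 (i + 1) (by omega) this).le
  · exact (hlam.1 i hi a (a + 1) hia (by omega) (by omega)).ge

theorem lam_anti_aux (s : ℕ) (k : ℕ → ℕ) (lam : ℕ → ℝ) (hlam : HasBlockStructure s k lam)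
    (a b : ℕ) (h1 : 1 ≤ a) (hab : a ≤ b) (h2 : b ≤ nseq k s) : lam b ≤ lam a := by
  induction b, hab using Nat.le_induction with
  | base => exact le_rfl
  | succ m hm ih =>
    exact (lam_step_aux s k lam hlam m (by omega) h2).trans (ih (by omega))

/-- Pairs of positions with different values of `lam`, among the first `N`. -/
noncomputable def freePairs (lam : ℕ → ℝ) (N : ℕ) : Finset (ℕ × ℕ) :=
  (Finset.Ioc 0 N ×ˢ Finset.Ioc 0 N).filter fun p => p.1 < p.2 ∧ lam p.1 ≠ lam p.2

theorem freePairs_card_aux (s : ℕ) (k : ℕ → ℕ) (lam : ℕ → ℝ) (hlam : HasBlockStructure s k lam)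
    (m : ℕ) (hm : m ≤ s) :
    (freePairs lam (nseq k m)).card = ∑ j ∈ Finset.range m, nseq k j * k j := by
  induction m with
  | zero => simp [freePairs, nseq]
  | succ m ih =>
    have hsucc := nseq_succ_aux k m
    have hle := nseq_mono_aux k hm
    have key : freePairs lam (nseq k (m + 1)) = freePairs lam (nseq k m) ∪
        (Finset.Ioc 0 (nseq k m) ×ˢ Finset.Ioc (nseq k m) (nseq k (m + 1))) := by
      ext ⟨a, b⟩
      simp only [freePairs, Finset.mem_filter, Finset.mem_product, Finset.mem_Ioc,
        Finset.mem_union]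
      constructor
      · rintro ⟨⟨⟨h1, h2⟩, h3, h4⟩, h5, h6⟩
        by_cases hb : b ≤ nseq k m
        · left
          exact ⟨⟨⟨h1, by omega⟩, h3, hb⟩, h5, h6⟩
        · right
          refine ⟨⟨h1, ?_⟩, by omega, h4⟩
          by_contra ha
          exact h6 (hlam.1 m (by omega) a b (by omega) h5.le h4)
      · rintro (⟨⟨⟨h1, h2⟩, h3, h4⟩, h5, h6⟩ | ⟨⟨h1, h2⟩, h3, h4⟩)
        · exact ⟨⟨⟨h1, by omega⟩, h3, by omega⟩, h5, h6⟩
        · refine ⟨⟨⟨h1, by omega⟩, by omega, h4⟩, by omega, ?_⟩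
          have e1 := lam_anti_aux s k lam hlam (nseq k m + 1) b (by omega) (by omega) (by omega)
          have e2 := lam_anti_aux s k lam hlam a (nseq k m) (by omega) (by omega) (by omega)
          have hm0 : 1 ≤ m := by
            rcases Nat.eq_zero_or_pos m with h0 | h0
            · subst h0
              simp [nseq] at h2
              omega
            · exact h0
          have e3 := hlam.2 m hm0 (by omega)
          exact ne_of_gt (by linarith)
    rw [key, Finset.card_union_of_disjoint, ih (by omega), Finset.sum_range_succ]
    · simp [hsucc]
    · rw [Finset.disjoint_left]
      rintro ⟨a, b⟩ h h'
      simp only [freePairs, Finset.mem_filter, Finset.mem_product, Finset.mem_Ioc] at h h'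
      omega

theorem gcIdx_finite_aux (n : ℕ) : (GCIdx n).Finite := by
  refine ((Finset.Icc 1 n ×ˢ Finset.Icc 1 n).finite_toSet).subset ?_
  rintro ⟨i, j⟩ ⟨h1, h2, h3⟩
  simp only at h1 h2 h3
  simp
  omega

/-- The unforced coordinates. -/
def freeIdx (n : ℕ) (lam : ℕ → ℝ) : Set (GCIdx n) :=
  {p | lam p.1.1 ≠ lam (n + 1 - p.1.2)}

theorem freeIdx_card_aux (n : ℕ) (lam : ℕ → ℝ) :
    (freeIdx n lam).ncard = (freePairs lam n).card := by
  rw [← Set.ncard_coe_finset]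
  refine Set.ncard_congr (fun p _ => (p.1.1, n + 1 - p.1.2)) ?_ ?_ ?_
  · rintro ⟨⟨i, j⟩, h1, h2, h3⟩ hp
    simp only [freeIdx, Set.mem_ofPred_eq] at hp h1 h2 h3
    simp only [freePairs, Finset.coe_filter, Finset.mem_product, Finset.mem_Ioc, Set.mem_ofPred_eq]
    exact ⟨by omega, by omega, hp⟩
  · rintro ⟨⟨i, j⟩, h1, h2, h3⟩ ⟨⟨i', j'⟩, h1', h2', h3'⟩ _ _ h
    simp only [Prod.mk.injEq] at h1 h2 h3 h1' h2' h3' h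
    have e1 : i = i' := h.1
    have e2 : j = j' := by omega
    subst e1 e2
    rfl
  · rintro ⟨a, b⟩ h
    simp only [freePairs, Finset.coe_filter, Finset.mem_product, Finset.mem_Ioc,
      Set.mem_ofPred_eq] at h
    refine ⟨⟨(a, n + 1 - b), ?_, ?_, ?_⟩, ?_, ?_⟩
    · simp only; omega
    · simp only; omega
    · simp only; omega
    · simp only [freeIdx, Set.mem_ofPred_eq]
      rw [show n + 1 - (n + 1 - b) = b by omega]
      exact h.2.2
    · simp only [Prod.mk.injEq, true_and]
      omega

/-- The point of the polytope attached to an up-set `U`. -/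
noncomputable def stepPt (n : ℕ) (lam : ℕ → ℝ) (U : ℕ → ℕ → Prop) : GCIdx n → ℝ :=
  fun p => if U p.1.1 p.1.2 then lam (n + 1 - p.1.2) else lam p.1.1

theorem gcEntry_stepPt_aux (n : ℕ) (lam : ℕ → ℝ) (U : ℕ → ℕ → Prop) (i j : ℕ)
    (h1 : 1 ≤ i) (h2 : 1 ≤ j) (h3 : i + j ≤ n + 1) :
    gcEntry n lam (stepPt n lam U) (i, j) = if U i j then lam (n + 1 - j) else lam i := by
  unfold gcEntry
  split_ifs with h
  · simp only [stepPt]; rw [if_pos ‹_›]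
  · simp only [stepPt]; rw [if_neg ‹_›]
  · have : n + 1 - j = i := by
      have : ¬ (i + j ≤ n) := fun hc => h ⟨h1, h2, hc⟩
      omega
    rw [this]
  · rfl

theorem stepPt_mem_aux (n : ℕ) (lam : ℕ → ℝ)
    (hanti : ∀ a b : ℕ, 1 ≤ a → a ≤ b → b ≤ n → lam b ≤ lam a) (U : ℕ → ℕ → Prop)
    (hU1 : ∀ i j, U i (j + 1) → U i j) (hU2 : ∀ i j, U i j → U (i + 1) j) :
    stepPt n lam U ∈ GCPoly n lam := by
  rintro i j ⟨h1, h2, h3⟩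
  simp only at h1 h2 h3
  rw [gcEntry_stepPt_aux n lam U i j h1 h2 (by omega),
    gcEntry_stepPt_aux n lam U i (j + 1) h1 (by omega) (by omega),
    gcEntry_stepPt_aux n lam U (i + 1) j (by omega) h2 (by omega)]
  have a1 := hanti i (n + 1 - (j + 1)) h1 (by omega) (by omega)
  have a2 := hanti (n + 1 - (j + 1)) (n + 1 - j) (by omega) (by omega) (by omega)
  have a3 := hanti i (i + 1) h1 (by omega) (by omega)
  have a4 := hanti (i + 1) (n + 1 - j) (by omega) (by omega) (by omega)
  have u1 := hU1 i j
  have u2 := hU2 i j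
  constructor
  · split_ifs <;> first | tauto | linarith
  · split_ifs <;> first | tauto | linarith

theorem gc_bounds_aux (n : ℕ) (lam : ℕ → ℝ) (x : GCIdx n → ℝ) (hx : x ∈ GCPoly n lam) (d : ℕ) :
    ∀ i j : ℕ, 1 ≤ i → 1 ≤ j → i + j + d = n + 1 →
      gcEntry n lam x (i, j) ≤ lam i ∧ lam (n + 1 - j) ≤ gcEntry n lam x (i, j) := by
  induction d with
  | zero =>
    intro i j h1 h2 h3
    have hn : (i, j) ∉ GCIdx n := by
      rintro ⟨_, _, h⟩
      simp only at h
      omega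
    have : n + 1 - j = i := by omega
    simp [gcEntry, hn, this]
  | succ d ih =>
    intro i j h1 h2 h3
    have hp : (i, j) ∈ GCIdx n := ⟨h1, h2, by simp only; omega⟩
    have := hx i j hp
    have b1 := ih i (j + 1) h1 (by omega) (by omega)
    have b2 := ih (i + 1) j (by omega) h2 (by omega)
    exact ⟨this.1.trans b1.1, b2.2.trans this.2⟩

theorem gc_forced_aux (n : ℕ) (lam : ℕ → ℝ) (x : GCIdx n → ℝ) (hx : x ∈ GCPoly n lam)
    (p : GCIdx n) (hp : p ∉ freeIdx n lam) : x p = lam p.1.1 := by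
  obtain ⟨⟨i, j⟩, h1, h2, h3⟩ := p
  simp only [freeIdx, Set.mem_ofPred_eq, not_not] at hp h1 h2 h3
  have := gc_bounds_aux n lam x hx (n + 1 - (i + j)) i j h1 h2 (by omega)
  rw [gcEntry, dif_pos ⟨h1, h2, h3⟩] at this
  exact le_antisymm this.1 (hp ▸ this.2)

theorem gc_direction_aux (n : ℕ) (lam : ℕ → ℝ) [Fintype (GCIdx n)]
    (hanti : ∀ a b : ℕ, 1 ≤ a → a ≤ b → b ≤ n → lam b ≤ lam a) :
    (affineSpan ℝ (GCPoly n lam)).direction =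
      Submodule.span ℝ ((Pi.basisFun ℝ (GCIdx n)) '' freeIdx n lam) := by
  rw [direction_affineSpan]
  apply le_antisymm
  · rw [vectorSpan_def, Submodule.span_le]
    rintro _ ⟨x, hx, y, hy, rfl⟩
    rw [SetLike.mem_coe, Module.Basis.mem_span_image]
    intro p hp
    by_contra hpf
    simp only [Finset.mem_coe, Finsupp.mem_support_iff, Pi.basisFun_repr] at hp
    apply hp
    simp [gc_forced_aux n lam x hx p hpf, gc_forced_aux n lam y hy p hpf]
  · rw [Submodule.span_le]
    rintro _ ⟨p, hp, rfl⟩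
    rw [SetLike.mem_coe, Pi.basisFun_apply]
    have hne : lam p.1.1 - lam (n + 1 - p.1.2) ≠ 0 := sub_ne_zero.mpr hp
    have m1 := stepPt_mem_aux n lam hanti
      (fun i j => p.1.1 ≤ i ∧ j ≤ p.1.2 ∧ ¬ (i = p.1.1 ∧ j = p.1.2))
      (by intro i j h; omega) (by intro i j h; omega)
    have m2 := stepPt_mem_aux n lam hanti (fun i j => p.1.1 ≤ i ∧ j ≤ p.1.2)
      (by intro i j h; omega) (by intro i j h; omega)
    have hv := vsub_mem_vectorSpan ℝ m1 m2
    have := Submodule.smul_mem _ (lam p.1.1 - lam (n + 1 - p.1.2))⁻¹ hv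
    convert this using 1
    ext q
    simp only [Pi.smul_apply, vsub_eq_sub, Pi.sub_apply, stepPt, smul_eq_mul]
    by_cases hq : q = p
    · subst hq
      simp [inv_mul_cancel₀ hne]
    · have hq' : ¬ (q.1.1 = p.1.1 ∧ q.1.2 = p.1.2) := fun h => hq (Subtype.ext (Prod.ext h.1 h.2))
      simp only [hq', not_false_eq_true, and_true, Pi.single_apply, hq, if_false]
      symm
      apply mul_eq_zero_of_right
      split_ifs <;> simp

theorem gc_finrank_aux (n : ℕ) (lam : ℕ → ℝ)
    (hanti : ∀ a b : ℕ, 1 ≤ a → a ≤ b → b ≤ n → lam b ≤ lam a) :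
    GCdim n (GCPoly n lam) = (freePairs lam n).card := by
  have : Fintype (GCIdx n) := (gcIdx_finite_aux n).fintype
  unfold GCdim
  rw [gc_direction_aux n lam hanti, ← freeIdx_card_aux, Set.image_eq_range]
  have h := finrank_span_eq_card ((Pi.basisFun ℝ (GCIdx n)).linearIndependent.comp
    (Subtype.val : freeIdx n lam → GCIdx n) Subtype.val_injective)
  rw [← Nat.card_eq_fintype_card] at h
  exact h

/-- The Gelfand–Cetlin polytope `P_λ` has dimension
`Σ_{1 ≤ i < j ≤ s} k_i k_j = (n² - Σ_i k_i²)/2`. -/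
theorem gcPoly_dim (s : ℕ) (hs : 1 ≤ s) (k : ℕ → ℕ) (hk : ∀ i < s, 0 < k i)
    (lam : ℕ → ℝ) (hlam : HasBlockStructure s k lam) :
    (GCdim (nseq k s) (GCPoly (nseq k s) lam) : ℤ) =
      ∑ j ∈ Finset.range s, ∑ i ∈ Finset.range j, (k i : ℤ) * (k j : ℤ) ∧
    2 * ∑ j ∈ Finset.range s, ∑ i ∈ Finset.range j, (k i : ℤ) * (k j : ℤ) =
      (nseq k s : ℤ) ^ 2 - ∑ i ∈ Finset.range s, (k i : ℤ) ^ 2 := by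
  have hsum : ∀ j, ∑ i ∈ Finset.range j, (k i : ℤ) * (k j : ℤ) = (nseq k j : ℤ) * k j := by
    intro j
    rw [← Finset.sum_mul]
    simp [nseq]
  refine ⟨?_, ?_⟩
  · rw [gc_finrank_aux _ _ (lam_anti_aux s k lam hlam),
      freePairs_card_aux s k lam hlam s le_rfl, Finset.sum_congr rfl fun j _ => hsum j]
    push_cast
    rfl
  · rw [Finset.sum_congr rfl fun j _ => hsum j]
    clear hs hk hlam
    induction s with
    | zero => simp [nseq]
    | succ m ih =>
      rw [Finset.sum_range_succ, Finset.sum_range_succ, nseq_succ_aux, mul_add, ih]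
      push_cast
      ring
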